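/- Both R-linear maps U₋^{≥0} ⊗_R U₋^{<0} → U₋ and U₋^{<0} ⊗_R U₋^{≥0} → U₋ induced by multiplication are bijective. -/

import Mathlib

open scoped TensorProduct

noncomputable section

/-- The base ring `R = ℂ[[ℏ]]`. -/
abbrev R : Type := PowerSeries ℂ

/-- The formal variable `ℏ ∈ ℂ[[ℏ]]`. -/
def hbar : R := PowerSeries.X

/-- The generators `f_n` of the free algebra. -/
def Fgen (n : ℤ) : FreeAlgebra R ℤ := FreeAlgebra.ι R n

/-- The defining relations of `U_ℏ𝔫₋`:
`f_{m+1}f_n − f_n f_{m+1} − f_m f_{n+1} + f_{n+1}f_m = −ℏ(f_m f_n + f_n f_m)`. -/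
inductive FRel : FreeAlgebra R ℤ → FreeAlgebra R ℤ → Prop
  | current (m n : ℤ) :
      FRel (Fgen (m + 1) * Fgen n - Fgen n * Fgen (m + 1)
              - Fgen m * Fgen (n + 1) + Fgen (n + 1) * Fgen m)
        (-(hbar • (Fgen m * Fgen n + Fgen n * Fgen m)))

/-- `U₋ = U_ℏ𝔫₋`, the quotient of the free `R`-algebra on the `f_n`, `n ∈ ℤ`,
by the two-sided ideal generated by the defining relations. -/
abbrev Uminus : Type := RingQuot FRel

/-- The image of `f_n` in `U₋`. -/
def f (n : ℤ) : Uminus := RingQuot.mkAlgHom R FRel (Fgen n)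

/-- `U₋^{≥0}`, the `R`-subalgebra of `U₋` generated by the `f_n` with `n ≥ 0`. -/
def Umge : Subalgebra R Uminus := Algebra.adjoin R (Set.range fun n : ℕ => f (n : ℤ))

/-- `U₋^{<0}`, the `R`-subalgebra of `U₋` generated by the `f_n` with `n < 0`. -/
def Umlt : Subalgebra R Uminus := Algebra.adjoin R {x : Uminus | ∃ n : ℤ, n < 0 ∧ x = f n}

/-!
It is enough that, for every way of ordering the letters of each multiset of indices, the resulting
monomials in the `f n` are a basis of `U₋`, and that those with letters in an interval span the
subalgebra generated by them.

*Spanning.* By the current relations, the commutator of `f a` and `f b` is a combination of words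
`f x * f y` with `x`, `y` between `a` and `b` and `x + y < a + b`. So reordering a word costs only
words with letters in the same interval and a smaller sum of indices.

*Independence.* On functions `v` of finite subsets `S` of `ℂˣ`, the operators
`(f n • v) S = ∑ a ∈ S, a ^ n * (∏ b ∈ S \ a, (a - b - ℏ) / (a - b)) * v (S \ a)`
satisfy the current relations. Modulo `ℏ`, a monomial in the `f n` sends the indicator function of
`∅` to the polarization of the corresponding commutative monomial, evaluated at the vectors
`(a ^ n) n`, `a ∈ S`. In characteristic zero a polynomial is determined by these values, because a
nonzero Laurent polynomial has finitely many roots; and independence modulo `ℏ` lifts to `ℂ[[ℏ]]`.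
-/

section Straightening

variable {ι 𝕜 A : Type*} [CommRing 𝕜] [Ring A] [Algebra 𝕜 A]

/-- The span of the words in the letters `φ x`, `x ∈ J`, of weight less than `N`, where the letter
`φ x` has weight `w x`: a step of the weight filtration. -/
def lowerSpan (𝕜 : Type*) [CommRing 𝕜] [Algebra 𝕜 A] (φ : ι → A) (J : Set ι) (w : ι → ℕ) (N : ℕ) :
    Submodule 𝕜 A :=
  Submodule.span 𝕜
    ((fun l : List ι => (l.map φ).prod) '' {l | (∀ x ∈ l, x ∈ J) ∧ (l.map w).sum < N})

variable {φ : ι → A} {J : Set ι} {w : ι → ℕ}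

theorem prod_map_mem_lowerSpan {N : ℕ} {l : List ι} (hl : ∀ x ∈ l, x ∈ J)
    (hN : (l.map w).sum < N) : (l.map φ).prod ∈ lowerSpan 𝕜 φ J w N :=
  Submodule.subset_span ⟨l, ⟨hl, hN⟩, rfl⟩

theorem mul_mem_lowerSpan {N : ℕ} {u : A} (hu : u ∈ lowerSpan 𝕜 φ J w N) {x : ι} (hx : x ∈ J) :
    φ x * u ∈ lowerSpan 𝕜 φ J w (w x + N) := by
  suffices h : lowerSpan 𝕜 φ J w N ≤
      (lowerSpan 𝕜 φ J w (w x + N)).comap (LinearMap.mulLeft 𝕜 (φ x)) from h hu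
  refine Submodule.span_le.2 ?_
  rintro _ ⟨l, ⟨hl, hN⟩, rfl⟩
  exact Submodule.subset_span
    ⟨x :: l, ⟨List.forall_mem_cons.2 ⟨hx, hl⟩, by simpa using hN⟩, by simp⟩

theorem mul_prod_map_mem_lowerSpan {N : ℕ} {u : A} (hu : u ∈ lowerSpan 𝕜 φ J w N) {l : List ι}
    (hl : ∀ x ∈ l, x ∈ J) : u * (l.map φ).prod ∈ lowerSpan 𝕜 φ J w (N + (l.map w).sum) := by
  suffices h : lowerSpan 𝕜 φ J w N ≤ (lowerSpan 𝕜 φ J w (N + (l.map w).sum)).comap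
      (LinearMap.mulRight 𝕜 (l.map φ).prod) from h hu
  refine Submodule.span_le.2 ?_
  rintro _ ⟨l', ⟨hl', hN⟩, rfl⟩
  exact Submodule.subset_span
    ⟨l' ++ l, ⟨List.forall_mem_append.2 ⟨hl', hl⟩, by simpa using hN⟩, by simp⟩

theorem prod_map_sub_mem_lowerSpan_of_perm
    (hcomm : ∀ a ∈ J, ∀ b ∈ J, φ a * φ b - φ b * φ a ∈ lowerSpan 𝕜 φ J w (w a + w b))
    {l l' : List ι} (h : l.Perm l') (hl : ∀ x ∈ l, x ∈ J) :
    (l.map φ).prod - (l'.map φ).prod ∈ lowerSpan 𝕜 φ J w (l.map w).sum := by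
  induction h with
  | nil => simp
  | cons x _ ih =>
    obtain ⟨hx, hl⟩ := List.forall_mem_cons.1 hl
    simpa [mul_sub] using mul_mem_lowerSpan (ih hl) hx
  | swap x y l =>
    obtain ⟨hy, hx, hl⟩ := by simpa only [List.forall_mem_cons] using hl
    simpa [sub_mul, mul_assoc, add_assoc] using mul_prod_map_mem_lowerSpan (hcomm y hy x hx) hl
  | trans h₁ _ ih₁ ih₂ =>
    have h₂ := ih₂ fun x hx => hl x (h₁.mem_iff.2 hx)
    rw [← (h₁.map w).sum_eq] at h₂
    simpa using add_mem (ih₁ hl) h₂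

-- Reordering a word costs only words of smaller weight, to which the same applies.
theorem prod_map_mem_span_of_commutator_mem
    (hcomm : ∀ a ∈ J, ∀ b ∈ J, φ a * φ b - φ b * φ a ∈ lowerSpan 𝕜 φ J w (w a + w b))
    {L : Multiset ι → List ι} (hL : ∀ s, (L s : Multiset ι) = s)
    {l : List ι} (hl : ∀ x ∈ l, x ∈ J) :
    (l.map φ).prod ∈
      Submodule.span 𝕜 ((fun s => ((L s).map φ).prod) '' {s | ∀ x ∈ s, x ∈ J}) := by
  induction hN : (l.map w).sum using Nat.strong_induction_on generalizing l with
  | _ N ih =>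
    subst hN
    have hdiff := prod_map_sub_mem_lowerSpan_of_perm hcomm
      (Multiset.coe_eq_coe.1 (hL l)).symm hl
    have hlower : lowerSpan 𝕜 φ J w (l.map w).sum ≤
        Submodule.span 𝕜 ((fun s => ((L s).map φ).prod) '' {s | ∀ x ∈ s, x ∈ J}) := by
      refine Submodule.span_le.2 ?_
      rintro _ ⟨l', ⟨hl', hlt⟩, rfl⟩
      exact ih _ hlt hl' rfl
    rw [← sub_add_cancel (l.map φ).prod ((L l).map φ).prod]
    exact add_mem (hlower hdiff) (Submodule.subset_span ⟨l, by simpa using hl, rfl⟩)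

theorem toSubmodule_adjoin_image_eq_span_prod_map (φ : ι → A) (J : Set ι) :
    Subalgebra.toSubmodule (Algebra.adjoin 𝕜 (φ '' J)) =
      Submodule.span 𝕜 ((fun l : List ι => (l.map φ).prod) '' {l | ∀ x ∈ l, x ∈ J}) := by
  rw [Algebra.adjoin_eq_span, Submonoid.closure_eq_image_prod, Set.image_eq_range φ,
    ← Set.range_list_map, ← Set.range_list_map_coe, ← Set.range_comp, ← Set.range_comp]
  simp only [Function.comp_def, List.map_map]

end Straightening

section OrderedMonomials

variable {ι 𝕜 A : Type*} [CommRing 𝕜] [Ring A] [Algebra 𝕜 A]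

/-- The product of the letters `φ x` over a multiset, in the order chosen by `Multiset.toList`. -/
def orderedMonomial (φ : ι → A) (s : Multiset ι) : A := (s.toList.map φ).prod

open scoped Classical in
/-- A list of the elements of a multiset in which those in `I` come first. -/
def splitList (I : Set ι) (s : Multiset ι) : List ι :=
  (s.filter (· ∈ I)).toList ++ (s.filter (· ∉ I)).toList

theorem coe_splitList (I : Set ι) (s : Multiset ι) : (splitList I s : Multiset ι) = s := by
  classical
  rw [splitList, ← Multiset.coe_add, Multiset.coe_toList, Multiset.coe_toList,
    Multiset.filter_add_not]

theorem splitList_add {I : Set ι} {s t : Multiset ι} (hs : ∀ x ∈ s, x ∈ I) (ht : ∀ x ∈ t, x ∈ Iᶜ) :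
    splitList I (s + t) = s.toList ++ t.toList := by
  classical
  have hs' : s.filter (· ∉ I) = 0 := Multiset.filter_eq_nil.2 fun x hx => not_not.2 (hs x hx)
  have ht' : t.filter (· ∉ I) = t := Multiset.filter_eq_self.2 ht
  rw [splitList, Multiset.filter_add, Multiset.filter_add, Multiset.filter_eq_self.2 hs,
    Multiset.filter_eq_nil.2 ht, hs', ht', add_zero, zero_add]

theorem injective_add_of_disjoint (I : Set ι) :
    Function.Injective fun p : {s : Multiset ι | ∀ x ∈ s, x ∈ I} ×
      {s : Multiset ι | ∀ x ∈ s, x ∈ Iᶜ} => (p.1 : Multiset ι) + p.2 := by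
  classical
  rintro ⟨⟨s, hs⟩, ⟨t, ht⟩⟩ ⟨⟨s', hs'⟩, ⟨t', ht'⟩⟩ h
  have hss' : s = s' := by
    simpa [Multiset.filter_add, Multiset.filter_eq_self.2 hs, Multiset.filter_eq_self.2 hs',
      Multiset.filter_eq_nil.2 ht, Multiset.filter_eq_nil.2 ht'] using
        congrArg (Multiset.filter (· ∈ I)) h
  subst hss'
  simpa using h

variable {φ : ι → A}

theorem injective_mulMap_span_orderedMonomial
    (hφ : ∀ L : Multiset ι → List ι, (∀ s, (L s : Multiset ι) = s) →
      LinearIndependent 𝕜 fun s => ((L s).map φ).prod) (I : Set ι) :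
    Function.Injective (Submodule.mulMap
      (Submodule.span 𝕜 (orderedMonomial φ '' {s | ∀ x ∈ s, x ∈ I}))
      (Submodule.span 𝕜 (orderedMonomial φ '' {s | ∀ x ∈ s, x ∈ Iᶜ}))) := by
  have hmon : LinearIndependent 𝕜 (orderedMonomial φ) := hφ _ Multiset.coe_toList
  have hI := hmon.comp ((↑) : {s : Multiset ι | ∀ x ∈ s, x ∈ I} → Multiset ι)
    Subtype.val_injective
  have hIc := hmon.comp ((↑) : {s : Multiset ι | ∀ x ∈ s, x ∈ Iᶜ} → Multiset ι)
    Subtype.val_injective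
  have hmul := (hφ _ (coe_splitList I)).comp _ (injective_add_of_disjoint I)
  rw [Set.image_eq_range, Set.image_eq_range]
  refine (Submodule.LinearDisjoint.of_basis_mul' _ _ (Module.Basis.span hI)
    (Module.Basis.span hIc) ?_).injective
  convert hmul.finsuppLinearCombination_injective using 4 with p
  simp only [Module.Basis.span_apply, Function.comp_apply, orderedMonomial,
    splitList_add p.1.2 p.2.2, List.map_append, List.prod_append]

end OrderedMonomials

section CurrentRelations

variable {𝕜 A : Type*} [CommRing 𝕜] [Ring A] [Algebra 𝕜 A]

/-- The mode form of the current relation `(z − w + ℏ) φ(z) φ(w) = (z − w − ℏ) φ(w) φ(z)`, where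
`φ(z) = ∑ φ n z ^ (−n − 1)`, for the family `φ`. -/
def IsCurrent (ℏ : 𝕜) (φ : ℤ → A) : Prop :=
  ∀ m n : ℤ, φ (m + 1) * φ n - φ n * φ (m + 1) - φ m * φ (n + 1) + φ (n + 1) * φ m =
    -(ℏ • (φ m * φ n + φ n * φ m))

variable {ℏ : 𝕜} {φ : ℤ → A}

namespace IsCurrent

theorem commutator_add_one (hφ : IsCurrent ℏ φ) (h2 : IsUnit (2 : 𝕜)) (n : ℤ) :
    φ (n + 1) * φ n - φ n * φ (n + 1) = -(ℏ • (φ n * φ n)) := by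
  rw [← h2.smul_left_cancel, two_smul, two_smul, ← neg_add, ← smul_add, ← hφ n n]
  abel

theorem commutator_add_two (hφ : IsCurrent ℏ φ) (m n : ℤ) :
    φ (m + 2) * φ n - φ n * φ (m + 2) =
      (φ (m + 1) * φ (n + 1) - φ (n + 1) * φ (m + 1)) -
        ℏ • (φ (m + 1) * φ n + φ n * φ (m + 1)) := by
  have h := hφ (m + 1) n
  rw [add_assoc, one_add_one_eq_two] at h
  rw [sub_eq_add_neg _ (ℏ • _), ← h]
  abel

theorem commutator_add_natCast_mem_lowerSpan (hφ : IsCurrent ℏ φ) (h2 : IsUnit (2 : 𝕜))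
    {J : Set ℤ} [J.OrdConnected] {lo : ℤ} (hlo : ∀ x ∈ J, lo ≤ x) (d : ℕ) {n : ℤ} (hn : n ∈ J)
    (hd : n + d ∈ J) :
    φ (n + d) * φ n - φ n * φ (n + d) ∈
      lowerSpan 𝕜 φ J (fun x => (x - lo).toNat) ((n + d - lo).toNat + (n - lo).toNat) := by
  have mul_mem {N : ℕ} {a b : ℤ} (ha : a ∈ J) (hb : b ∈ J)
      (h : (a - lo).toNat + (b - lo).toNat < N) :
      φ a * φ b ∈ lowerSpan 𝕜 φ J (fun x => (x - lo).toNat) N := by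
    simpa using prod_map_mem_lowerSpan (𝕜 := 𝕜) (φ := φ) (l := [a, b]) (by simp [ha, hb])
      (by simpa using h)
  have hn_lo := hlo n hn
  induction d using Nat.twoStepInduction generalizing n with
  | zero => simp
  | one =>
    rw [Nat.cast_one, hφ.commutator_add_one h2]
    exact neg_mem (Submodule.smul_mem _ _ (mul_mem hn hn (by omega)))
  | more d ih _ =>
    have mem_J {x : ℤ} (h₁ : n ≤ x) (h₂ : x ≤ n + ↑(d + 2)) : x ∈ J :=
      Set.OrdConnected.out ‹_› hn hd ⟨h₁, h₂⟩
    have hmem : n + d + 1 ∈ J := mem_J (by omega) (by omega)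
    have hinner := ih (n := n + 1) (mem_J (by omega) (by omega)) (mem_J (by omega) (by omega))
      (by omega)
    rw [add_right_comm,
      show (n + d + 1 - lo).toNat + (n + 1 - lo).toNat =
        (n + ↑(d + 2) - lo).toNat + (n - lo).toNat by omega] at hinner
    rw [show φ (n + ↑(d + 2)) = φ (n + d + 2) by push_cast; ring_nf, hφ.commutator_add_two]
    exact sub_mem hinner (Submodule.smul_mem _ _ (add_mem (mul_mem hmem hn (by omega))
      (mul_mem hn hmem (by omega))))

theorem commutator_mem_lowerSpan (hφ : IsCurrent ℏ φ) (h2 : IsUnit (2 : 𝕜)) {J : Set ℤ}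
    [J.OrdConnected] {lo : ℤ} (hlo : ∀ x ∈ J, lo ≤ x) {a b : ℤ} (ha : a ∈ J) (hb : b ∈ J) :
    φ a * φ b - φ b * φ a ∈
      lowerSpan 𝕜 φ J (fun x => (x - lo).toNat) ((a - lo).toNat + (b - lo).toNat) := by
  rcases le_total b a with h | h
  · obtain ⟨d, rfl⟩ := Int.le.dest h
    exact hφ.commutator_add_natCast_mem_lowerSpan h2 hlo d hb ha
  · obtain ⟨d, rfl⟩ := Int.le.dest h
    rw [← neg_sub (φ _ * _), add_comm (a - lo).toNat]
    exact neg_mem (hφ.commutator_add_natCast_mem_lowerSpan h2 hlo d ha hb)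

theorem prod_map_mem_span (hφ : IsCurrent ℏ φ) (h2 : IsUnit (2 : 𝕜)) {I : Set ℤ} [I.OrdConnected]
    {L : Multiset ℤ → List ℤ} (hL : ∀ s, (L s : Multiset ℤ) = s) {l : List ℤ}
    (hl : ∀ x ∈ l, x ∈ I) :
    (l.map φ).prod ∈
      Submodule.span 𝕜 ((fun s => ((L s).map φ).prod) '' {s | ∀ x ∈ s, x ∈ I}) := by
  obtain ⟨lo, hlo⟩ := l.toFinset.bddBelow
  have hlJ : ∀ x ∈ l, x ∈ I ∩ Set.Ici lo := fun x hx => ⟨hl x hx, hlo (by simpa using hx)⟩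
  have hspan := prod_map_mem_span_of_commutator_mem (J := I ∩ Set.Ici lo)
    (fun a ha b hb => hφ.commutator_mem_lowerSpan h2 (fun x hx => hx.2) ha hb) hL hlJ
  exact Submodule.span_mono (Set.image_mono fun s hs x hx => (hs x hx).1) hspan

theorem toSubmodule_adjoin_image_eq_span_orderedMonomial (hφ : IsCurrent ℏ φ)
    (h2 : IsUnit (2 : 𝕜)) (I : Set ℤ) [I.OrdConnected] :
    Subalgebra.toSubmodule (Algebra.adjoin 𝕜 (φ '' I)) =
      Submodule.span 𝕜 (orderedMonomial φ '' {s | ∀ x ∈ s, x ∈ I}) := by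
  rw [toSubmodule_adjoin_image_eq_span_prod_map]
  refine le_antisymm (Submodule.span_le.2 ?_) (Submodule.span_mono ?_)
  · rintro _ ⟨l, hl, rfl⟩
    exact hφ.prod_map_mem_span h2 Multiset.coe_toList hl
  · rintro _ ⟨s, hs, rfl⟩
    exact ⟨s.toList, by simpa using hs, rfl⟩

theorem adjoin_range_le_range_mulMap (hφ : IsCurrent ℏ φ) (h2 : IsUnit (2 : 𝕜)) (I : Set ℤ) :
    Subalgebra.toSubmodule (Algebra.adjoin 𝕜 (Set.range φ)) ≤
      LinearMap.range (Submodule.mulMap (Subalgebra.toSubmodule (Algebra.adjoin 𝕜 (φ '' I)))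
        (Subalgebra.toSubmodule (Algebra.adjoin 𝕜 (φ '' Iᶜ)))) := by
  classical
  rw [← Set.image_univ, toSubmodule_adjoin_image_eq_span_prod_map, Submodule.mulMap_range]
  refine Submodule.span_le.2 ?_
  rintro _ ⟨l, hl, rfl⟩
  refine Submodule.span_le.2 ?_ (hφ.prod_map_mem_span h2 (coe_splitList I) hl)
  rintro _ ⟨s, -, rfl⟩
  simp only [splitList, List.map_append, List.prod_append]
  refine Submodule.mul_mem_mul (Subalgebra.list_prod_mem _ ?_) (Subalgebra.list_prod_mem _ ?_) <;>
    simp only [List.forall_mem_map, Multiset.mem_toList, Multiset.mem_filter] <;>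
    exact fun x hx => Algebra.subset_adjoin ⟨x, hx.2, rfl⟩

theorem bijective_mulMap_adjoin_image (hφ : IsCurrent ℏ φ) (h2 : IsUnit (2 : 𝕜))
    (hgen : Algebra.adjoin 𝕜 (Set.range φ) = ⊤)
    (hindep : ∀ L : Multiset ℤ → List ℤ, (∀ s, (L s : Multiset ℤ) = s) →
      LinearIndependent 𝕜 fun s => ((L s).map φ).prod)
    {I J : Set ℤ} [I.OrdConnected] [J.OrdConnected] (hIJ : Iᶜ = J) :
    Function.Bijective (Submodule.mulMap (Subalgebra.toSubmodule (Algebra.adjoin 𝕜 (φ '' I)))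
      (Subalgebra.toSubmodule (Algebra.adjoin 𝕜 (φ '' J)))) := by
  subst hIJ
  constructor
  · rw [hφ.toSubmodule_adjoin_image_eq_span_orderedMonomial h2,
      hφ.toSubmodule_adjoin_image_eq_span_orderedMonomial h2]
    exact injective_mulMap_span_orderedMonomial hindep I
  · rw [← LinearMap.range_eq_top, eq_top_iff, ← Algebra.top_toSubmodule, ← hgen]
    exact hφ.adjoin_range_le_range_mulMap h2 I

end IsCurrent

end CurrentRelations

section Polarization

variable {K σ α : Type*} [CommRing K]

/-- The derivative of polynomials in the direction of the constant vector field `c`. -/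
def directionalDeriv (c : σ → K) : Derivation K (MvPolynomial σ K) (MvPolynomial σ K) :=
  MvPolynomial.mkDerivation K fun n => MvPolynomial.C (c n)

theorem directionalDeriv_X (c : σ → K) (n : σ) :
    directionalDeriv c (MvPolynomial.X n) = MvPolynomial.C (c n) :=
  MvPolynomial.mkDerivation_X _ _ _

theorem directionalDeriv_X_mul (c : σ → K) (n : σ) (p : MvPolynomial σ K) :
    directionalDeriv c (MvPolynomial.X n * p) =
      c n • p + MvPolynomial.X n * directionalDeriv c p := by
  rw [Derivation.leibniz, directionalDeriv_X, smul_eq_mul, smul_eq_mul, mul_comm p,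
    MvPolynomial.smul_eq_C_mul, add_comm]

theorem commute_directionalDeriv (c d : σ → K) :
    Commute (directionalDeriv c : Module.End K (MvPolynomial σ K))
      (directionalDeriv d : Module.End K (MvPolynomial σ K)) := by
  have bracket_eq_zero : ⁅directionalDeriv c, directionalDeriv d⁆ = 0 :=
    MvPolynomial.derivation_ext fun n => by simp [Derivation.commutator_apply, directionalDeriv_X]
  rw [commute_iff_lie_eq, ← Derivation.commutator_coe_linear_map, bracket_eq_zero,
    Derivation.coe_zero_linearMap]

theorem directionalDeriv_eq_sum_pderiv (c : σ → K) (p : MvPolynomial σ K) :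
    directionalDeriv c p = ∑ n ∈ p.vars, c n • MvPolynomial.pderiv n p := by
  classical
  have eval_sum (q : MvPolynomial σ K) :
      (∑ n ∈ p.vars, c n • MvPolynomial.pderiv (R := K) n) q =
        ∑ n ∈ p.vars, c n • MvPolynomial.pderiv n q := by
    have coe_sum := map_sum (Derivation.coeFnAddMonoidHom (R := K) (A := MvPolynomial σ K)
      (M := MvPolynomial σ K)) (fun n => c n • MvPolynomial.pderiv n) p.vars
    exact (congrFun coe_sum q).trans (Finset.sum_apply _ _ _)
  rw [← eval_sum]
  refine MvPolynomial.derivation_eq_of_forall_mem_vars fun n hn => ?_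
  simp [eval_sum, directionalDeriv_X, MvPolynomial.pderiv_X, MvPolynomial.smul_eq_C_mul,
    Pi.single_apply, hn]

theorem pairwise_commute_directionalDeriv (c : α → σ → K) (S : Set α) :
    S.Pairwise (Function.onFun Commute fun a =>
      (directionalDeriv (c a) : Module.End K (MvPolynomial σ K))) :=
  fun _ _ _ _ _ => commute_directionalDeriv _ _

/-- The polarization `p ↦ ((∏ a ∈ S, ∂_{c a}) p)(0)`: on homogeneous polynomials of degree `#S`, the
value at the vectors `c a`, `a ∈ S`, of the symmetric multilinear form that restricts to `(#S)! • p`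
on the diagonal. -/
def polarization (c : α → σ → K) (S : Finset α) : MvPolynomial σ K →ₗ[K] K :=
  MvPolynomial.lcoeff K 0 ∘ₗ
    S.noncommProd (fun a => (directionalDeriv (c a) : Module.End K (MvPolynomial σ K)))
      (pairwise_commute_directionalDeriv c S)

variable (c : α → σ → K)

theorem polarization_empty (p : MvPolynomial σ K) : polarization c ∅ p = p.coeff 0 := by
  simp [polarization]

theorem polarization_insert [DecidableEq α] {a : α} {S : Finset α} (ha : a ∉ S)
    (p : MvPolynomial σ K) :
    polarization c (insert a S) p = polarization c S (directionalDeriv (c a) p) := by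
  rw [polarization, Finset.noncommProd_insert_of_notMem' _ _ _ _ ha]
  rfl

theorem polarization_one [DecidableEq α] (S : Finset α) :
    polarization c S 1 = if S = ∅ then 1 else 0 := by
  induction S using Finset.induction_on with
  | empty => simp [polarization_empty]
  | insert a S ha _ => simp [polarization_insert c ha]

theorem polarization_X_mul [DecidableEq α] (S : Finset α) (n : σ) (p : MvPolynomial σ K) :
    polarization c S (MvPolynomial.X n * p) =
      ∑ a ∈ S, c a n * polarization c (S.erase a) p := by
  induction S using Finset.induction_on generalizing p with
  | empty => simp [polarization_empty, ← MvPolynomial.constantCoeff_eq]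
  | insert a S ha ih =>
    have erase_insert : ∀ b ∈ S, polarization c ((insert a S).erase b) p =
        polarization c (S.erase b) (directionalDeriv (c a) p) := fun b hb => by
      rw [Finset.erase_insert_of_ne (ne_of_mem_of_not_mem hb ha).symm,
        polarization_insert c fun h => ha (Finset.mem_of_mem_erase h)]
    rw [polarization_insert c ha, directionalDeriv_X_mul, map_add, map_smul, smul_eq_mul, ih,
      Finset.sum_insert ha, Finset.erase_insert ha]
    exact congrArg _ (Finset.sum_congr rfl fun b hb => by rw [erase_insert b hb])

variable {c}

theorem polarization_pderiv_eq_zero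
    (hc : ∀ (S : Finset α) (d : σ →₀ K), (∀ a ∉ S, (d.sum fun n x => c a n * x) = 0) → d = 0)
    {p : MvPolynomial σ K} (hp : ∀ S, polarization c S p = 0) (n : σ) (S : Finset α) :
    polarization c S (MvPolynomial.pderiv n p) = 0 := by
  classical
  let d : σ →₀ K := Finsupp.onFinset p.vars
    (fun n => polarization c S (MvPolynomial.pderiv n p)) fun n hn => by
      contrapose! hn
      rw [MvPolynomial.pderiv_eq_zero_of_notMem_vars hn, map_zero]
  have hd : d = 0 := hc S d fun a ha => by
    rw [Finsupp.onFinset_sum _ fun n => mul_zero _, ← hp (insert a S), polarization_insert c ha,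
      directionalDeriv_eq_sum_pderiv, map_sum]
    simp
  exact DFunLike.congr_fun hd n

theorem eq_zero_of_polarization_eq_zero [IsDomain K] [CharZero K]
    (hc : ∀ (S : Finset α) (d : σ →₀ K), (∀ a ∉ S, (d.sum fun n x => c a n * x) = 0) → d = 0)
    {p : MvPolynomial σ K} (hp : ∀ S, polarization c S p = 0) : p = 0 := by
  ext m
  rw [MvPolynomial.coeff_zero]
  induction hm : m.degree generalizing m p with
  | zero =>
    rw [(Finsupp.degree_eq_zero_iff m).1 hm, ← polarization_empty c, hp]
  | succ k ih =>
    obtain ⟨n, hn⟩ : ∃ n, m n ≠ 0 := by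
      by_contra! h
      simp [Finsupp.ext (g := 0) h] at hm
    obtain ⟨m, rfl⟩ : ∃ m', m = m' + Finsupp.single n 1 :=
      ⟨_, (tsub_add_cancel_of_le (Finsupp.single_le_iff.2 (Nat.one_le_iff_ne_zero.2 hn))).symm⟩
    have hcoeff := ih (polarization_pderiv_eq_zero hc hp n) m (by simpa using hm)
    rw [MvPolynomial.coeff_pderiv] at hcoeff
    exact (mul_eq_zero.1 hcoeff).resolve_right (Nat.cast_add_one_ne_zero _)

theorem prod_map_X_eq_monomial [DecidableEq σ] (s : Multiset σ) :
    (s.map (MvPolynomial.X (R := K))).prod = MvPolynomial.monomial (Multiset.toFinsupp s) 1 := by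
  induction s using Multiset.induction_on with
  | empty => simp
  | cons n s ih =>
    rw [Multiset.map_cons, Multiset.prod_cons, ih, MvPolynomial.X, MvPolynomial.monomial_mul,
      ← Multiset.singleton_add, map_add, Multiset.toFinsupp_singleton, one_mul]

theorem linearIndependent_polarization [IsDomain K] [CharZero K]
    (hc : ∀ (S : Finset α) (d : σ →₀ K), (∀ a ∉ S, (d.sum fun n x => c a n * x) = 0) → d = 0) :
    LinearIndependent K fun (s : Multiset σ) (S : Finset α) =>
      polarization c S (s.map MvPolynomial.X).prod := by
  classical
  have hmon : LinearIndependent K fun s : Multiset σ => (s.map (MvPolynomial.X (R := K))).prod := by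
    simpa only [prod_map_X_eq_monomial, Function.comp_def, MvPolynomial.coe_basisMonomials] using
      (MvPolynomial.basisMonomials σ K).linearIndependent.comp _ Multiset.toFinsupp.injective
  refine hmon.map' (LinearMap.pi (polarization c)) (LinearMap.ker_eq_bot'.2 fun p hp => ?_)
  exact eq_zero_of_polarization_eq_zero hc (congrFun hp)

end Polarization

section LaurentPolynomial

open LaurentPolynomial

variable {K : Type*} [CommRing K]

theorem eval₂_ofCoeff (d : ℤ →₀ K) (a : Kˣ) :
    LaurentPolynomial.eval₂ (RingHom.id K) a (AddMonoidAlgebra.ofCoeff d) =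
      d.sum fun n x => ((a ^ n : Kˣ) : K) * x := by
  conv_lhs => rw [← d.sum_single, AddMonoidAlgebra.ofCoeff_finsuppSum, map_finsuppSum]
  refine Finsupp.sum_congr fun n _ => ?_
  rw [AddMonoidAlgebra.ofCoeff_single, single_eq_C_mul_T, eval₂_C_mul_T, RingHom.id_apply, mul_comm]

variable [IsDomain K]

theorem laurentPolynomial_eq_zero_of_infinite_roots {p : K[T;T⁻¹]} {s : Set Kˣ} (hs : s.Infinite)
    (h : ∀ a ∈ s, p.eval₂ (RingHom.id K) a = 0) : p = 0 := by
  obtain ⟨n, q, hq⟩ := p.exists_T_pow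
  have hq0 : q = 0 := by
    refine q.eq_zero_of_infinite_isRoot ((hs.image Units.val_injective.injOn).mono ?_)
    rintro _ ⟨a, ha, rfl⟩
    change q.eval (a : K) = 0
    rw [← Polynomial.eval₂_id, ← eval₂_toLaurent, hq, map_mul, h a ha, zero_mul]
  rw [hq0, map_zero] at hq
  exact (isUnit_T (n : ℤ)).mul_left_eq_zero.1 hq.symm

theorem finsupp_eq_zero_of_sum_zpow_mul_eq_zero [Infinite Kˣ] (S : Finset Kˣ) (d : ℤ →₀ K)
    (h : ∀ a ∉ S, (d.sum fun n x => ((a ^ n : Kˣ) : K) * x) = 0) : d = 0 :=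
  AddMonoidAlgebra.ofCoeff_eq_zero.1 <|
    laurentPolynomial_eq_zero_of_infinite_roots S.finite_toSet.infinite_compl fun a ha =>
      (eval₂_ofCoeff d a).trans (h a ha)

end LaurentPolynomial

section PowerSeries

open PowerSeries

theorem linearIndependent_of_constantCoeff {ι T K : Type*} [CommRing K] (v : ι → T → K⟦X⟧)
    (hv : LinearIndependent K fun i t => constantCoeff (v i t)) : LinearIndependent K⟦X⟧ v := by
  rw [linearIndependent_iff'] at hv ⊢
  intro s c hc
  have hdvd (d : ℕ) : ∀ i ∈ s, X ^ d ∣ c i := by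
    induction d with
    | zero => simp
    | succ d ih =>
      choose! c' hc' using ih
      have hc'0 : ∑ i ∈ s, c' i • v i = 0 := by
        ext1 t
        refine X_pow_mul_injective (k := d) ?_
        calc X ^ d * (∑ i ∈ s, c' i • v i) t = (∑ i ∈ s, c i • v i) t := by
              simp only [Finset.sum_apply, Pi.smul_apply, smul_eq_mul, Finset.mul_sum]
              exact Finset.sum_congr rfl fun i hi => by rw [← mul_assoc, ← hc' i hi]
          _ = X ^ d * 0 := by rw [hc, Pi.zero_apply, mul_zero]
      have hcoeff := hv s (fun i => constantCoeff (c' i)) <| funext fun t => by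
        simpa using congrArg constantCoeff (congrFun hc'0 t)
      intro i hi
      rw [hc' i hi, pow_succ]
      exact mul_dvd_mul_left _ (X_dvd_iff.2 (hcoeff i hi))
  intro i hi
  ext d
  exact X_pow_dvd_iff.1 (hdvd (d + 1) i hi) d d.lt_succ_self

end PowerSeries

section FockRepresentation

open PowerSeries

theorem sum_sum_erase_eq_zero {α M : Type*} [DecidableEq α] [AddCommMonoid M] {h : α → α → M}
    (hh : ∀ a b, a ≠ b → h a b + h b a = 0) (S : Finset α) :
    ∑ a ∈ S, ∑ b ∈ S.erase a, h a b = 0 := by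
  rw [Finset.sum_sigma']
  refine Finset.sum_involution (fun p _ => ⟨p.2, p.1⟩) ?_ ?_ ?_ ?_ <;>
    simp only [Finset.mem_sigma, Finset.mem_erase]
  · exact fun p hp => hh _ _ (Ne.symm hp.2.1)
  · exact fun p hp _ h => hp.2.1 (congrArg Sigma.fst h)
  · exact fun p hp => ⟨hp.2.2, Ne.symm hp.2.1, hp.1⟩
  · exact fun _ _ => trivial

variable {K : Type*} [Field K]

/-- The structure function `(a - b - ℏ) / (a - b)` of the current relation, with `ℏ = X`. Its junk
value at `a = b` never enters. -/
def structureFun (a b : Kˣ) : K⟦X⟧ := 1 - C ((a - b : K)⁻¹) * X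

theorem constantCoeff_structureFun (a b : Kˣ) : constantCoeff (structureFun a b) = 1 := by
  simp [structureFun]

theorem sub_add_X_mul_structureFun {a b : Kˣ} (hab : a ≠ b) :
    (C (a : K) - C (b : K) + X) * structureFun a b =
      -((C (b : K) - C (a : K) + X) * structureFun b a) := by
  have hinv : (C (a : K) - C (b : K)) * (C ((a - b : K)⁻¹) : K⟦X⟧) = 1 := by
    rw [← map_sub, ← map_mul, mul_inv_cancel₀ (sub_ne_zero.2 (Units.val_injective.ne hab)), map_one]
  rw [structureFun, structureFun, ← neg_sub (a : K) b, inv_neg, map_neg]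
  linear_combination (-2 * X) * hinv

variable [DecidableEq Kˣ]

/-- The operator by which `f n` acts on functions of finite subsets of `Kˣ`: the `n`-th mode of the
creation current, which adds a point `a` with weight `a ^ n`. -/
def creation (n : ℤ) : Module.End K⟦X⟧ (Finset Kˣ → K⟦X⟧) where
  toFun v S := ∑ a ∈ S,
    C ((a ^ n : Kˣ) : K) * (∏ b ∈ S.erase a, structureFun a b) * v (S.erase a)
  map_add' v w := by
    ext1 S
    simp [mul_add, Finset.sum_add_distrib]
  map_smul' c v := by
    ext1 S
    simp only [Pi.smul_apply, smul_eq_mul, RingHom.id_apply, Finset.mul_sum]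
    exact Finset.sum_congr rfl fun a _ => by ring

theorem creation_apply (n : ℤ) (v : Finset Kˣ → K⟦X⟧) (S : Finset Kˣ) :
    creation n v S = ∑ a ∈ S,
      C ((a ^ n : Kˣ) : K) * (∏ b ∈ S.erase a, structureFun a b) * v (S.erase a) := rfl

/-- The part of the coefficient of `a`, `b` in a product of two creation operators which is
symmetric in `a` and `b`. -/
def pairFactor (v : Finset Kˣ → K⟦X⟧) (S : Finset Kˣ) (a b : Kˣ) : K⟦X⟧ :=
  (∏ c ∈ (S.erase a).erase b, structureFun a c * structureFun b c) * v ((S.erase a).erase b)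

theorem pairFactor_comm (v : Finset Kˣ → K⟦X⟧) (S : Finset Kˣ) (a b : Kˣ) :
    pairFactor v S a b = pairFactor v S b a := by
  simp only [pairFactor, Finset.erase_right_comm (a := a), mul_comm (structureFun a _)]

theorem creation_mul_creation_apply (m n : ℤ) (v : Finset Kˣ → K⟦X⟧) (S : Finset Kˣ) :
    (creation m * creation n : Module.End _ _) v S = ∑ a ∈ S, ∑ b ∈ S.erase a,
      C ((a ^ m : Kˣ) : K) * C ((b ^ n : Kˣ) : K) * (structureFun a b * pairFactor v S a b) := by
  rw [Module.End.mul_apply, creation_apply]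
  refine Finset.sum_congr rfl fun a _ => ?_
  rw [creation_apply, Finset.mul_sum]
  refine Finset.sum_congr rfl fun b hb => ?_
  rw [pairFactor, Finset.prod_mul_distrib, ← Finset.mul_prod_erase _ _ hb]
  ring

theorem isCurrent_creation : IsCurrent (X : K⟦X⟧) (creation (K := K)) := by
  intro m n
  rw [← sub_eq_zero, sub_neg_eq_add]
  ext1 v
  ext1 S
  have hzero := sum_sum_erase_eq_zero (S := S) (h := fun a b =>
    (C ((a ^ m : Kˣ) : K) * C ((b ^ n : Kˣ) : K) + C ((a ^ n : Kˣ) : K) * C ((b ^ m : Kˣ) : K)) *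
      ((C (a : K) - C (b : K) + X) * structureFun a b) * pairFactor v S a b) fun a b hab => by
    rw [sub_add_X_mul_structureFun hab, pairFactor_comm]
    ring
  simp only [LinearMap.add_apply, LinearMap.sub_apply, LinearMap.smul_apply, Pi.add_apply,
    Pi.sub_apply, Pi.smul_apply, smul_eq_mul, LinearMap.zero_apply, Pi.zero_apply,
    creation_mul_creation_apply]
  rw [← hzero]
  simp only [← Finset.sum_add_distrib, ← Finset.sum_sub_distrib, Finset.mul_sum]
  refine Finset.sum_congr rfl fun a _ => Finset.sum_congr rfl fun b _ => ?_
  simp only [zpow_add_one, Units.val_mul, map_mul]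
  ring

-- Modulo `ℏ` the structure function is `1` and `creation_apply` becomes `polarization_X_mul`.
theorem constantCoeff_prod_map_creation_vacuum (l : List ℤ) (S : Finset Kˣ) :
    constantCoeff ((l.map creation).prod (Pi.single ∅ 1) S) =
      polarization (fun (a : Kˣ) (n : ℤ) => ((a ^ n : Kˣ) : K)) S
        (l.map MvPolynomial.X).prod := by
  induction l generalizing S with
  | nil =>
    rw [List.map_nil, List.map_nil, List.prod_nil, List.prod_nil, polarization_one,
      Module.End.one_apply, Pi.single_apply]
    split_ifs <;> simp
  | cons n l ih =>
    rw [List.map_cons, List.map_cons, List.prod_cons, List.prod_cons, polarization_X_mul,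
      Module.End.mul_apply, creation_apply, map_sum]
    simp [ih, constantCoeff_structureFun]

theorem infinite_units_of_charZero (K : Type*) [Field K] [CharZero K] : Infinite Kˣ :=
  .of_injective (fun n : ℕ => Units.mk0 (n + 1 : K) n.cast_add_one_ne_zero) fun m n h => by
    simpa using congrArg Units.val h

theorem linearIndependent_prod_map_creation_vacuum [CharZero K] {L : Multiset ℤ → List ℤ}
    (hL : ∀ s, (L s : Multiset ℤ) = s) :
    LinearIndependent K⟦X⟧ fun s => ((L s).map (creation (K := K))).prod (Pi.single ∅ 1) := by
  have := infinite_units_of_charZero K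
  refine linearIndependent_of_constantCoeff _ ?_
  convert linearIndependent_polarization (K := K)
    (finsupp_eq_zero_of_sum_zpow_mul_eq_zero (K := K)) using 3 with s S
  rw [constantCoeff_prod_map_creation_vacuum, ← Multiset.prod_coe, ← Multiset.map_coe, hL]

end FockRepresentation

section CurrentAlgebra

universe u

/-- `φ` presents `A` as the algebra generated by the modes of a current: it satisfies the current
relation, generates `A`, and is universal among such families in the algebras of the universe of
`𝕜`, which is large enough for the representations used here. -/
structure IsCurrentAlgebra {𝕜 : Type u} {A : Type*} [CommRing 𝕜] [Ring A] [Algebra 𝕜 A]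
    (ℏ : 𝕜) (φ : ℤ → A) : Prop where
  isCurrent : IsCurrent ℏ φ
  adjoin_range : Algebra.adjoin 𝕜 (Set.range φ) = ⊤
  exists_lift {B : Type u} [Ring B] [Algebra 𝕜 B] {ψ : ℤ → B} (hψ : IsCurrent ℏ ψ) :
    ∃ ρ : A →ₐ[𝕜] B, ∀ n, ρ (φ n) = ψ n

open PowerSeries

variable {K A : Type*} [Field K] [CharZero K] [Ring A] [Algebra K⟦X⟧ A] {φ : ℤ → A}

theorem IsCurrentAlgebra.linearIndependent (hφ : IsCurrentAlgebra (X : K⟦X⟧) φ)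
    {L : Multiset ℤ → List ℤ} (hL : ∀ s, (L s : Multiset ℤ) = s) :
    LinearIndependent K⟦X⟧ fun s => ((L s).map φ).prod := by
  classical
  obtain ⟨ρ, hρ⟩ := hφ.exists_lift (isCurrent_creation (K := K))
  refine .of_comp (LinearMap.applyₗ (Pi.single ∅ 1) ∘ₗ ρ.toLinearMap) ?_
  convert linearIndependent_prod_map_creation_vacuum (K := K) hL with s
  simp [map_list_prod, Function.comp_def, hρ]

theorem mulMap_minus_bijective_general (hφ : IsCurrentAlgebra (X : K⟦X⟧) φ) (k : ℤ) :
    Function.Bijective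
      (Submodule.mulMap (Subalgebra.toSubmodule (Algebra.adjoin K⟦X⟧ (φ '' Set.Ici k)))
        (Subalgebra.toSubmodule (Algebra.adjoin K⟦X⟧ (φ '' Set.Iio k)))) ∧
    Function.Bijective
      (Submodule.mulMap (Subalgebra.toSubmodule (Algebra.adjoin K⟦X⟧ (φ '' Set.Iio k)))
        (Subalgebra.toSubmodule (Algebra.adjoin K⟦X⟧ (φ '' Set.Ici k)))) := by
  have h2 : IsUnit (2 : K⟦X⟧) := by
    rw [← map_ofNat (C (R := K)) 2]
    exact (IsUnit.mk0 (2 : K) two_ne_zero).map C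
  have hbij {I J : Set ℤ} [I.OrdConnected] [J.OrdConnected] (hIJ : Iᶜ = J) :=
    hφ.isCurrent.bijective_mulMap_adjoin_image h2 hφ.adjoin_range (fun _ => hφ.linearIndependent)
      hIJ
  exact ⟨hbij Set.compl_Ici, hbij Set.compl_Iio⟩

end CurrentAlgebra

theorem isCurrent_f : IsCurrent hbar f := fun m n => by
  simpa only [f, map_add, map_sub, map_mul, map_neg, map_smul] using
    RingQuot.mkAlgHom_rel R (FRel.current m n)

theorem isCurrentAlgebra_f : IsCurrentAlgebra hbar f where
  isCurrent := isCurrent_f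
  adjoin_range := by
    rw [show f = RingQuot.mkAlgHom R FRel ∘ FreeAlgebra.ι R from rfl, Set.range_comp,
      ← AlgHom.map_adjoin, FreeAlgebra.adjoin_range_ι, Algebra.map_top, AlgHom.range_eq_top]
    exact RingQuot.mkAlgHom_surjective R FRel
  exists_lift {B _ _ ψ} hψ := by
    refine ⟨RingQuot.liftAlgHom R ⟨FreeAlgebra.lift R ψ, ?_⟩, fun n => ?_⟩
    · rintro _ _ ⟨m, n⟩
      simpa only [Fgen, map_add, map_sub, map_mul, map_neg, map_smul,
        FreeAlgebra.lift_ι_apply] using hψ m n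
    · rw [f, RingQuot.liftAlgHom_mkAlgHom_apply, Fgen, FreeAlgebra.lift_ι_apply]

theorem Umge_eq_adjoin_image : Umge = Algebra.adjoin R (f '' Set.Ici 0) := by
  have range_cast : Set.range ((↑) : ℕ → ℤ) = Set.Ici 0 :=
    Set.ext fun n => ⟨by rintro ⟨k, rfl⟩; exact Int.natCast_nonneg k,
      fun h => ⟨n.toNat, Int.toNat_of_nonneg h⟩⟩
  rw [Umge, Set.range_comp' f, range_cast]

theorem Umlt_eq_adjoin_image : Umlt = Algebra.adjoin R (f '' Set.Iio 0) := by
  simp only [Umlt, Set.image, Set.mem_Iio, eq_comm]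

/-- both multiplication maps `U₋^{≥0} ⊗_R U₋^{<0} → U₋` and
`U₋^{<0} ⊗_R U₋^{≥0} → U₋` are bijective. -/
theorem mulMap_minus_bijective :
    Function.Bijective
      (Submodule.mulMap (Subalgebra.toSubmodule Umge) (Subalgebra.toSubmodule Umlt)) ∧
    Function.Bijective
      (Submodule.mulMap (Subalgebra.toSubmodule Umlt) (Subalgebra.toSubmodule Umge)) := by
  rw [Umge_eq_adjoin_image, Umlt_eq_adjoin_image]
  exact mulMap_minus_bijective_general isCurrentAlgebra_f 0

end
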